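/- There exists a 9-dimensional 5-uniform subspace of (C^3)^{⊗18} (equivalently, a pure quantum error-correcting code ((18, 9, 6))_3). Moreover, there exists a 4-dimensional 5-uniform subspace of the 19-partite space C^2 ⊗ (C^3)^{⊗18}, and a 2-dimensional 5-uniform subspace of the 20-partite space (C^2)^{⊗2} ⊗ (C^3)^{⊗18}. -/

import Mathlib

/-!
Common definitions: multipartite systems with parties indexed by a finite type `ι`,
local dimensions `d : ι → ℕ`, vectors as functions on the configuration space,
partial traces, and `r`-uniform states and subspaces.
-/

open scoped ComplexConjugate Matrix

namespace RUnif

variable {ι : Type} [Fintype ι] [DecidableEq ι]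

/-- Configuration space (computational basis index set) of the multipartite system
`ℂ^{d i₁} ⊗ ... ⊗ ℂ^{d iₙ}`. -/
abbrev Cfg (d : ι → ℕ) : Type := ∀ i, Fin (d i)

/-- The multipartite Hilbert space `ℂ^{d i₁} ⊗ ... ⊗ ℂ^{d iₙ}`, realized as functions
on the configuration space. -/
abbrev H (d : ι → ℕ) : Type := Cfg d → ℂ

/-- The standard hermitian inner product `⟪φ, ψ⟫`. -/
noncomputable def dotc (d : ι → ℕ) (φ ψ : H d) : ℂ :=
  ∑ x, conj (φ x) * ψ x

/-- The rank-one operator `|ψ⟩⟨φ|` as a matrix. -/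
noncomputable def dyad (d : ι → ℕ) (ψ φ : H d) : Matrix (Cfg d) (Cfg d) ℂ :=
  Matrix.of fun x y => ψ x * conj (φ y)

/-- Configurations of the parties inside `S`. -/
abbrev SubCfg (d : ι → ℕ) (S : Finset ι) : Type := ∀ i : S, Fin (d i.1)

/-- Configurations of the parties outside `S`. -/
abbrev CoCfg (d : ι → ℕ) (S : Finset ι) : Type := ∀ i : {j : ι // j ∉ S}, Fin (d i.1)

/-- Merge a configuration of the parties in `S` with one of the parties outside `S`. -/
def merge (d : ι → ℕ) (S : Finset ι) (a : SubCfg d S) (c : CoCfg d S) : Cfg d :=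
  fun i => if h : i ∈ S then a ⟨i, h⟩ else c ⟨i, h⟩

/-- Partial trace over the parties *outside* `S` (i.e. `Tr_{Sᶜ}`), leaving an operator
on the parties in `S`. -/
noncomputable def ptr (d : ι → ℕ) (S : Finset ι) (M : Matrix (Cfg d) (Cfg d) ℂ) :
    Matrix (SubCfg d S) (SubCfg d S) ℂ :=
  Matrix.of fun a b => ∑ c : CoCfg d S, M (merge d S a c) (merge d S b c)

/-- The maximally mixed state `(1/d_S) I_S` on the parties in `S`. -/
noncomputable def unifMix (d : ι → ℕ) (S : Finset ι) :
    Matrix (SubCfg d S) (SubCfg d S) ℂ :=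
  (∏ i : S, (d i.1 : ℂ))⁻¹ • 1

/-- `ψ` is a unit vector. -/
def IsUnitVec (d : ι → ℕ) (ψ : H d) : Prop := dotc d ψ ψ = 1

/-- `ψ` is `r`-uniform: every reduction to `r` parties is maximally mixed. -/
def IsUniform (d : ι → ℕ) (r : ℕ) (ψ : H d) : Prop :=
  ∀ S : Finset ι, S.card = r → ptr d S (dyad d ψ ψ) = unifMix d S

/-- A subspace is `r`-uniform if every unit vector in it is an `r`-uniform state. -/
def IsUniformSubspace (d : ι → ℕ) (r : ℕ) (W : Submodule ℂ (H d)) : Prop :=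
  ∀ ψ ∈ W, IsUnitVec d ψ → IsUniform d r ψ

end RUnif

/-!
The subspaces are obtained as *pure* ones: every nontrivial Pauli error on at most five parties has
vanishing matrix elements between any two of their vectors. Expanding a reduced density matrix in
the Pauli basis shows that this makes every unit vector 5-uniform.

Let `C` be an `F9`-linear code of length 18 and dimension 8. If `C` is self-orthogonal for the
Hermitian form, then its words and their multiples by `i` give commuting Pauli operators of order
three, and one of their at most `9 ^ 8` joint eigenspaces has dimension at least
`3 ^ 18 / 9 ^ 8 = 9`. That eigenspace is pure to order five if no nonzero word of weight at most
five is orthogonal to `C`, since such an error then fails to commute with some stabilizer.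

Label the coordinates by pairs `(a, ε)` with `a ∈ F9` and `ε = ± 1`, and let `C` be spanned by the
words `c(ε) ε ^ s a ^ k` for `s = 0`, `k = 0, 1, 2, 3, 4` and `s = 1`, `k = 0, 1, 3`, where `c(ε)`
has norm `ε`. The Hermitian product of the words with exponents `(s, k)` and `(t, l)` factors as
`(∑ ε, ε ^ (1 + s + t)) (∑ a, a ^ (3 k + l))`, and one of the factors always vanishes. For the dual
distance, observe that in characteristic three these monomials are exactly those occurring in
`(a + ε X) ^ k` for `k < 5`. A word orthogonal to `C` therefore gives, up to nonzero factors, a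
linear relation between the first five powers of the distinct elements `a + ε X` of `F9[X]`, which
is impossible on at most five coordinates by the Vandermonde determinant.

If `Φ (j, y)` is an orthonormal family in a pure subspace, with `y` ranging over the configurations
of some further parties, then the vectors `∑ y, |y⟩ ⊗ Φ (j, y)` span a subspace that is pure to the
same order. Nine dimensions leave room for `4 * 2` and for `2 * 4` such vectors.
-/

namespace RUnif

variable {ι : Type} {d : ι → ℕ}

section Err

variable [∀ i, NeZero (d i)]

variable (d) in
/-- The group of Pauli errors modulo phases, written additively: an error is a family of pairs
(shift, character), one for each party. -/
abbrev Err : Type := ∀ i, Fin (d i) × AddChar (Fin (d i)) ℂ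

variable [DecidableEq ι]

/-- The error acting as `f` on the parties in `S` and trivially on the others. -/
def localErr (S : Finset ι) (f : ∀ i : S, Fin (d i) × AddChar (Fin (d i)) ℂ) : Err d :=
  fun i => if h : i ∈ S then f ⟨i, h⟩ else 0

lemma localErr_eq_zero {S : Finset ι} {f : ∀ i : S, Fin (d i) × AddChar (Fin (d i)) ℂ} :
    localErr S f = 0 ↔ f = 0 := by
  refine ⟨fun h => funext fun i => ?_, fun h => funext fun i => ?_⟩
  · simpa [localErr] using congrFun h i
  · simp [localErr, h]

end Err

variable [Fintype ι]

section InnerProduct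

variable [DecidableEq ι]

lemma dotc_eq_dotProduct (φ ψ : H d) : dotc d φ ψ = star φ ⬝ᵥ ψ := rfl

lemma dotc_smul_left (c : ℂ) (φ ψ : H d) : dotc d (c • φ) ψ = conj c * dotc d φ ψ := by
  simp only [dotc_eq_dotProduct, star_smul, smul_dotProduct, smul_eq_mul, RCLike.star_def]

lemma dotc_smul_right (c : ℂ) (φ ψ : H d) : dotc d φ (c • ψ) = c * dotc d φ ψ := by
  simp only [dotc_eq_dotProduct, dotProduct_smul, smul_eq_mul]

end InnerProduct

section Weyl

variable [∀ i, NeZero (d i)]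

/-- The Weyl (generalized Pauli) operator `ψ ↦ (x ↦ χ(x) ψ(x + a))`, where `a` collects the shifts
and `χ` the characters of `e`. -/
noncomputable def weyl (e : Err d) : H d →ₗ[ℂ] H d where
  toFun ψ x := (∏ i, (e i).2 (x i)) * ψ fun i => x i + (e i).1
  map_add' _ _ := funext fun _ => mul_add ..
  map_smul' _ _ := funext fun _ => mul_left_comm ..

lemma weyl_apply (e : Err d) (ψ : H d) (x : Cfg d) :
    weyl e ψ x = (∏ i, (e i).2 (x i)) * ψ fun i => x i + (e i).1 := rfl

/-- The cocycle of the projective representation `weyl`, see `weyl_mul_weyl`. -/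
noncomputable def phase (e f : Err d) : ℂ := ∏ i, (f i).2 (e i).1

lemma phase_ne_zero (e f : Err d) : phase e f ≠ 0 :=
  Finset.prod_ne_zero_iff.2 fun i _ => ((f i).2.val_isUnit _).ne_zero

lemma phase_nsmul_left (n : ℕ) (e f : Err d) : phase (n • e) f = phase e f ^ n := by
  simp only [phase, Pi.smul_apply, Prod.smul_fst, AddChar.map_nsmul_eq_pow, Finset.prod_pow]

lemma weyl_zero : weyl (0 : Err d) = 1 := by
  ext
  simp [weyl_apply]

lemma weyl_mul_weyl (e f : Err d) : weyl e * weyl f = phase e f • weyl (e + f) := by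
  refine LinearMap.ext fun ψ => funext fun x => ?_
  simp only [Module.End.mul_apply, LinearMap.smul_apply, Pi.smul_apply, smul_eq_mul, weyl_apply,
    phase, AddChar.map_add_eq_mul, Finset.prod_mul_distrib, Pi.add_apply, Prod.fst_add,
    Prod.snd_add, AddChar.add_apply, add_assoc]
  ring

lemma weyl_pow (e : Err d) (n : ℕ) :
    weyl e ^ n = phase e e ^ n.choose 2 • weyl (n • e) := by
  induction n with
  | zero => simp [weyl_zero]
  | succ n ih =>
    rw [pow_succ, ih, smul_mul_assoc, weyl_mul_weyl, phase_nsmul_left, smul_smul, ← pow_add,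
      ← succ_nsmul, Nat.choose_succ_succ' n 1, Nat.choose_one_right, add_comm (n.choose 2)]

/-- Oddness makes the exponent `m.choose 2` of the phase of the `m`-th power a multiple of `m`. -/
lemma weyl_pow_eq_one {m : ℕ} (hm : Odd m) {e : Err d} (he : m • e = 0) : weyl e ^ m = 1 := by
  have hphase : phase e e ^ m = 1 := by
    rw [← phase_nsmul_left, he]
    simp [phase]
  obtain ⟨k, rfl⟩ := hm
  rw [weyl_pow, he, weyl_zero, Nat.choose_two_right, Nat.add_sub_cancel, mul_left_comm,
    Nat.mul_div_cancel_left _ two_pos, pow_mul, hphase, one_pow, one_smul]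

variable [DecidableEq ι]

lemma dotc_weyl_weyl (e : Err d) (φ ψ : H d) :
    dotc d (weyl e φ) (weyl e ψ) = dotc d φ ψ := by
  refine Fintype.sum_equiv (Equiv.addRight fun i => (e i).1) _ _ fun x => ?_
  have hunit : conj (∏ i, (e i).2 (x i)) * ∏ i, (e i).2 (x i) = 1 := by
    rw [RCLike.conj_mul, norm_prod]
    simp
  rw [weyl_apply, weyl_apply, map_mul, mul_mul_mul_comm, hunit, one_mul]
  rfl

end Weyl

section Pure

lemma sum_prod_addChar_apply {κ : Type*} [Fintype κ] [DecidableEq κ] {G : κ → Type*}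
    [∀ k, AddCommGroup (G k)] [∀ k, Fintype (G k)] [∀ k, DecidableEq (G k)] (g : ∀ k, G k) :
    ∑ χ : ∀ k, AddChar (G k) ℂ, ∏ k, χ k (g k) =
      if g = 0 then ∏ k, (Fintype.card (G k) : ℂ) else 0 := by
  rw [← Fintype.prod_sum fun k (χ : AddChar (G k) ℂ) => χ (g k)]
  simp only [AddChar.sum_apply_eq_ite]
  rw [Finset.prod_ite_zero]
  simp only [Finset.mem_univ, true_imp_iff, funext_iff, Pi.zero_apply]

lemma fourier_inversion_pi {κ : Type*} [Fintype κ] [DecidableEq κ] {G : κ → Type*}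
    [∀ k, AddCommGroup (G k)] [∀ k, Fintype (G k)] (F : (∀ k, G k) → ℂ) (b : ∀ k, G k) :
    ∑ χ : ∀ k, AddChar (G k) ℂ, (∏ k, χ k (-b k)) * ∑ a, (∏ k, χ k (a k)) * F a =
      (∏ k, (Fintype.card (G k) : ℂ)) * F b := by
  classical
  simp only [Finset.mul_sum]
  rw [Finset.sum_comm]
  have hsum (a : ∀ k, G k) :
      ∑ χ : ∀ k, AddChar (G k) ℂ, (∏ k, χ k (-b k)) * ((∏ k, χ k (a k)) * F a) =
        if a = b then (∏ k, (Fintype.card (G k) : ℂ)) * F a else 0 := by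
    simp only [← mul_assoc, ← Finset.sum_mul, ← Finset.prod_mul_distrib,
      ← AddChar.map_add_eq_mul, neg_add_eq_sub]
    rw [sum_prod_addChar_apply (fun k => a k - b k), ite_mul, zero_mul]
    simp only [funext_iff, Pi.zero_apply, sub_eq_zero]
  simp only [hsum, Finset.sum_ite_eq', Finset.mem_univ, if_true]

variable [DecidableEq ι]

lemma sum_merge (S : Finset ι) (F : Cfg d → ℂ) :
    ∑ a, ∑ c, F (merge d S a c) = ∑ x, F x := by
  rw [← Fintype.sum_prod_type']
  exact (Equiv.piEquivPiSubtypeProd (· ∈ S) fun i => Fin (d i)).symm.sum_comp F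

variable [∀ i, NeZero (d i)]

/-- A subspace is pure to order `r` if no nontrivial error on at most `r` parties has a nonzero
matrix element between two of its vectors. -/
def IsPure (r : ℕ) (W : Submodule ℂ (H d)) : Prop :=
  ∀ ⦃S : Finset ι⦄, S.card ≤ r → ∀ ⦃e : Err d⦄, e ≠ 0 → (∀ i ∉ S, e i = 0) →
    ∀ φ ∈ W, ∀ ψ ∈ W, dotc d φ (weyl e ψ) = 0

lemma IsPure.mono {r : ℕ} {V W : Submodule ℂ (H d)} (hW : IsPure r W) (hVW : V ≤ W) :
    IsPure r V :=
  fun _ hS _ he heS φ hφ ψ hψ => hW hS he heS φ (hVW hφ) ψ (hVW hψ)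

lemma IsPure.exists_finrank_eq {r m : ℕ} {W : Submodule ℂ (H d)} (hW : IsPure r W)
    (hm : m ≤ Module.finrank ℂ W) :
    ∃ V : Submodule ℂ (H d), IsPure r V ∧ Module.finrank ℂ V = m := by
  obtain ⟨φ, hφ⟩ := exists_linearIndependent_of_le_finrank hm
  have hφW : LinearIndependent ℂ fun i => (φ i : H d) := hφ.map' _ W.ker_subtype
  refine ⟨.span ℂ (Set.range fun i => (φ i : H d)), hW.mono (Submodule.span_le.2 ?_), ?_⟩
  · exact Set.range_subset_iff.2 fun i => (φ i).2
  · rw [finrank_span_eq_card hφW, Fintype.card_fin]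

lemma weyl_localErr_merge (S : Finset ι) (f : ∀ i : S, Fin (d i) × AddChar (Fin (d i)) ℂ)
    (ψ : H d) (a : SubCfg d S) (c : CoCfg d S) :
    weyl (localErr S f) ψ (merge d S a c) =
      (∏ i, (f i).2 (a i)) * ψ (merge d S (fun i => a i + (f i).1) c) := by
  rw [weyl_apply, ← Finset.prod_subset (Finset.subset_univ S), ← Finset.prod_coe_sort]
  · congr 2
    · funext i
      simp [localErr, merge]
    · funext i
      by_cases hi : i ∈ S <;> simp [localErr, merge, hi]
  · intro i _ hi
    simp [localErr, hi]

lemma dotc_weyl_localErr (S : Finset ι) (f : ∀ i : S, Fin (d i) × AddChar (Fin (d i)) ℂ)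
    (φ ψ : H d) :
    dotc d φ (weyl (localErr S f) ψ) =
      ∑ a, (∏ i, (f i).2 (a i)) * ptr d S (dyad d ψ φ) (fun i => a i + (f i).1) a := by
  simp only [dotc, ← sum_merge S, weyl_localErr_merge, ptr, dyad, Matrix.of_apply, Finset.mul_sum]
  exact Finset.sum_congr rfl fun a _ => Finset.sum_congr rfl fun c _ => by ring

lemma IsPure.dotc_weyl_localErr {r : ℕ} {W : Submodule ℂ (H d)} (hW : IsPure r W)
    {S : Finset ι} (hS : S.card ≤ r) {φ ψ : H d} (hφ : φ ∈ W) (hψ : ψ ∈ W)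
    (g : SubCfg d S) (χ : ∀ i : S, AddChar (Fin (d i)) ℂ) :
    dotc d φ (weyl (localErr S fun i => (g i, χ i)) ψ) =
      if χ = 0 then if g = 0 then dotc d φ ψ else 0 else 0 := by
  rw [← ite_and]
  split_ifs with h
  · rw [localErr_eq_zero.2 (by rw [h.1, h.2]; rfl), weyl_zero, Module.End.one_apply]
  · refine hW hS (localErr_eq_zero.not.2 fun h0 => h ?_) (fun i hi => dif_neg hi) φ hφ ψ hψ
    exact ⟨funext fun i => congrArg Prod.snd (congrFun h0 i),
      funext fun i => congrArg Prod.fst (congrFun h0 i)⟩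

lemma IsPure.ptr_dyad {r : ℕ} {W : Submodule ℂ (H d)} (hW : IsPure r W) {S : Finset ι}
    (hS : S.card ≤ r) {φ ψ : H d} (hφ : φ ∈ W) (hψ : ψ ∈ W) :
    ptr d S (dyad d ψ φ) = dotc d φ ψ • unifMix d S := by
  ext x b
  have hd : ∏ i : S, (d i : ℂ) ≠ 0 :=
    Finset.prod_ne_zero_iff.2 fun i _ => Nat.cast_ne_zero.2 (NeZero.ne _)
  have hinversion := fourier_inversion_pi
    (fun a => ptr d S (dyad d ψ φ) (a + (x - b)) a) b
  have hcoeff (χ : ∀ i : S, AddChar (Fin (d i)) ℂ) :=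
    (RUnif.dotc_weyl_localErr S (fun i => ((x - b) i, χ i)) φ ψ).symm.trans
      (hW.dotc_weyl_localErr hS hφ hψ (x - b) χ)
  simp only [Fintype.card_fin, add_sub_cancel] at hinversion
  refine mul_left_cancel₀ hd (hinversion.symm.trans ?_)
  refine (Finset.sum_congr rfl fun χ _ => congrArg _ (hcoeff χ)).trans ?_
  simp only [mul_ite, mul_zero, Finset.sum_ite_eq', Finset.mem_univ, if_true, sub_eq_zero,
    Pi.zero_apply, AddChar.zero_apply, Finset.prod_const_one, one_mul, unifMix, Matrix.smul_apply,
    Matrix.one_apply, smul_eq_mul, mul_one]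
  split_ifs
  · field_simp
  · rfl

lemma IsPure.isUniformSubspace {r : ℕ} {W : Submodule ℂ (H d)} (hW : IsPure r W) :
    IsUniformSubspace d r W := by
  intro ψ hψ hunit S hS
  rw [hW.ptr_dyad hS.le hψ hψ, hunit, one_smul]

end Pure

section JointEigenspace

open Module Module.End Polynomial

variable {F V : Type*} [Field F] [AddCommGroup V] [Module F V]

lemma maxGenEigenspace_eq_eigenspace_of_pow_eq_one {m : ℕ} [NeZero (m : F)] {T : End F V}
    (hT : T ^ m = 1) (μ : F) : T.maxGenEigenspace μ = T.eigenspace μ := by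
  have hsep : (X ^ m - 1 : F[X]).Separable := X_pow_sub_one_separable_iff.2 (NeZero.ne _)
  exact (isSemisimple_of_squarefree_aeval_eq_zero hsep.squarefree
    (by simp [hT])).isFinitelySemisimple.maxGenEigenspace_eq_eigenspace μ

lemma pow_eq_one_of_mem_eigenspace {m : ℕ} {T : End F V} (hT : T ^ m = 1) {μ : F} {v : V}
    (hv : v ∈ T.eigenspace μ) (hv0 : v ≠ 0) : μ ^ m = 1 := by
  have hpow : (T ^ m) v = μ ^ m • v := HasEigenvector.pow_apply ⟨hv, hv0⟩ m
  rw [hT, Module.End.one_apply] at hpow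
  exact smul_left_injective F hv0 (by simpa using hpow.symm)

variable [FiniteDimensional F V]

lemma finrank_iSup_le_sum {α : Type*} [Fintype α] (p : α → Submodule F V) :
    finrank F ↥(⨆ a, p a) ≤ ∑ a, finrank F (p a) := by
  rw [← Finset.sup_univ_eq_iSup]
  induction Finset.univ (α := α) using Finset.cons_induction with
  | empty => simp
  | cons a s ha ih =>
    rw [Finset.sup_cons, Finset.sum_cons]
    exact (Submodule.finrank_add_le_finrank_add_finrank _ _).trans (by gcongr)

variable [IsAlgClosed F]

lemma iSup_iInf_eigenspace_rootsOfUnity_eq_top {K : Type*} {m : ℕ} [NeZero (m : F)]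
    {T : K → End F V} (hcomm : Pairwise fun k l => Commute (T k) (T l)) (hT : ∀ k, T k ^ m = 1) :
    ⨆ μ : K → rootsOfUnity m F, ⨅ k, (T k).eigenspace (μ k : Fˣ) = ⊤ := by
  have htop := iSup_iInf_maxGenEigenspace_eq_top_of_iSup_maxGenEigenspace_eq_top_of_commute
    T hcomm fun k => iSup_maxGenEigenspace_eq_top (T k)
  refine top_le_iff.1 (htop.ge.trans (iSup_le fun χ => ?_))
  simp only [maxGenEigenspace_eq_eigenspace_of_pow_eq_one (hT _)]
  by_cases hχ : ∀ k, χ k ^ m = 1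
  · have : NeZero m := .of_neZero_natCast F
    exact le_iSup_of_le (fun k => rootsOfUnity.mkOfPowEq (χ k) (hχ k)) le_rfl
  · obtain ⟨k, hk⟩ := not_forall.1 hχ
    intro v hv
    have hv0 : v = 0 := by
      by_contra hv0
      exact hk (pow_eq_one_of_mem_eigenspace (hT k) ((Submodule.mem_iInf _).1 hv k) hv0)
    rw [hv0]
    exact zero_mem _

/-- Pigeonhole over the at most `m ^ |K|` joint eigenspaces. -/
lemma exists_finrank_le_pow_card_mul_finrank_iInf_eigenspace {K : Type*} [Fintype K] {m : ℕ}
    [NeZero (m : F)] {T : K → End F V} (hcomm : Pairwise fun k l => Commute (T k) (T l))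
    (hT : ∀ k, T k ^ m = 1) :
    ∃ μ : K → F, (∀ k, μ k ^ m = 1) ∧
      finrank F V ≤ m ^ Fintype.card K * finrank F ↥(⨅ k, (T k).eigenspace (μ k)) := by
  classical
  have : NeZero m := .of_neZero_natCast F
  have := Fintype.ofFinite (rootsOfUnity m F)
  obtain ⟨μ, -, hμ⟩ := Finset.exists_max_image Finset.univ
    (fun μ : K → rootsOfUnity m F => finrank F ↥(⨅ k, (T k).eigenspace (μ k : Fˣ)))
    Finset.univ_nonempty
  refine ⟨fun k => (μ k : Fˣ), fun k => (mem_rootsOfUnity' m _).1 (μ k).2, ?_⟩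
  have hsum := finrank_iSup_le_sum fun μ : K → rootsOfUnity m F =>
    ⨅ k, (T k).eigenspace (μ k : Fˣ)
  rw [iSup_iInf_eigenspace_rootsOfUnity_eq_top hcomm hT, finrank_top] at hsum
  refine (hsum.trans (Finset.sum_le_card_nsmul _ _ _ hμ)).trans ?_
  rw [smul_eq_mul, Finset.card_univ, Fintype.card_fun,
    ← Nat.card_eq_fintype_card (α := rootsOfUnity m F)]
  gcongr
  exact card_rootsOfUnity F m

end JointEigenspace

section Stabilizer

variable [∀ i, NeZero (d i)]

lemma phase_smul_weyl_mul_weyl (e f : Err d) :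
    phase e f • (weyl f * weyl e) = phase f e • (weyl e * weyl f) := by
  rw [weyl_mul_weyl, weyl_mul_weyl, smul_comm, add_comm]

lemma commute_weyl {e f : Err d} (h : phase e f = phase f e) : Commute (weyl e) (weyl f) := by
  have hcomm := phase_smul_weyl_mul_weyl e f
  rw [h] at hcomm
  exact (smul_right_injective _ (phase_ne_zero f e) hcomm).symm

variable [DecidableEq ι]

lemma dotc_weyl_eq_zero {e f : Err d} (hef : phase e f ≠ phase f e) {μ : ℂ} (hμ : ‖μ‖ = 1)
    {φ ψ : H d} (hφ : weyl f φ = μ • φ) (hψ : weyl f ψ = μ • ψ) : dotc d φ (weyl e ψ) = 0 := by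
  have hμμ : conj μ * μ = 1 := by rw [RCLike.conj_mul, hμ]; simp
  have hleft : dotc d (weyl f φ) (weyl f (weyl e ψ)) = dotc d φ (weyl e ψ) := dotc_weyl_weyl ..
  have hright : dotc d (weyl f φ) (weyl e (weyl f ψ)) = dotc d φ (weyl e ψ) := by
    rw [hφ, hψ, map_smul, dotc_smul_left, dotc_smul_right, ← mul_assoc, hμμ, one_mul]
  have hcomm := congrArg (fun T => dotc d (weyl f φ) (T ψ)) (phase_smul_weyl_mul_weyl e f)
  simp only [LinearMap.smul_apply, Module.End.mul_apply, dotc_smul_right, hleft, hright] at hcomm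
  exact (mul_eq_mul_right_iff.1 hcomm).resolve_left hef

theorem exists_isPure_of_stabilizer {K : Type*} [Fintype K] {m r : ℕ} (hm : Odd m)
    {s : K → Err d} (hs : ∀ k, m • s k = 0) (hcomm : ∀ k l, phase (s k) (s l) = phase (s l) (s k))
    (hdetect : ∀ S : Finset ι, S.card ≤ r → ∀ e : Err d, e ≠ 0 → (∀ i ∉ S, e i = 0) →
      ∃ k, phase e (s k) ≠ phase (s k) e) :
    ∃ W : Submodule ℂ (H d), IsPure r W ∧
      ∏ i, d i ≤ m ^ Fintype.card K * Module.finrank ℂ W := by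
  have : NeZero (m : ℂ) := ⟨Nat.cast_ne_zero.2 hm.pos.ne'⟩
  obtain ⟨μ, hμ, hrank⟩ := exists_finrank_le_pow_card_mul_finrank_iInf_eigenspace
    (fun k l _ => commute_weyl (hcomm k l)) fun k => weyl_pow_eq_one hm (hs k)
  refine ⟨_, fun S hS e he heS φ hφ ψ hψ => ?_, by simpa using hrank⟩
  obtain ⟨k, hk⟩ := hdetect S hS e he heS
  rw [Submodule.mem_iInf] at hφ hψ
  exact dotc_weyl_eq_zero hk (Complex.norm_eq_one_of_pow_eq_one (hμ k) hm.pos.ne')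
    (Module.End.mem_eigenspace_iff.1 (hφ k)) (Module.End.mem_eigenspace_iff.1 (hψ k))

end Stabilizer

section Orthonormal

variable [DecidableEq ι]

lemma exists_orthonormal_of_card_le_finrank {α : Type*} [Fintype α] [DecidableEq α]
    {W : Submodule ℂ (H d)} (hα : Fintype.card α ≤ Module.finrank ℂ W) :
    ∃ Φ : α → H d, (∀ a, Φ a ∈ W) ∧ ∀ a b, dotc d (Φ a) (Φ b) = if a = b then 1 else 0 := by
  let E : EuclideanSpace ℂ (Cfg d) ≃ₗ[ℂ] H d := WithLp.linearEquiv 2 ℂ (H d)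
  let V : Submodule ℂ (EuclideanSpace ℂ (Cfg d)) := W.comap E.toLinearMap
  have hV : Module.finrank ℂ V = Module.finrank ℂ W := by
    rw [← LinearEquiv.finrank_map_eq E.symm W]
    exact congrArg (fun U : Submodule ℂ (EuclideanSpace ℂ (Cfg d)) => Module.finrank ℂ U)
      (W.comap_equiv_eq_map_symm E)
  obtain ⟨f⟩ : Nonempty (α ↪ Fin (Module.finrank ℂ V)) :=
    Function.Embedding.nonempty_of_card_le (by rwa [Fintype.card_fin, hV])
  let u := stdOrthonormalBasis ℂ V
  refine ⟨fun a => E (u (f a)), fun a => (u (f a)).2, fun a b => ?_⟩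
  have horth := orthonormal_iff_ite.1 (u.orthonormal.comp f f.injective) a b
  rw [Submodule.coe_inner, EuclideanSpace.inner_eq_star_dotProduct, dotProduct_comm] at horth
  exact horth

lemma linearIndependent_of_dotc_eq_ite {α : Type*} [DecidableEq α] {Φ : α → H d}
    (hΦ : ∀ a b, dotc d (Φ a) (Φ b) = if a = b then 1 else 0) : LinearIndependent ℂ Φ := by
  refine linearIndependent_iff'.2 fun s g hg a ha => ?_
  have h := congrArg (dotc d (Φ a)) hg
  simp only [dotc_eq_dotProduct, dotProduct_sum, dotProduct_smul, dotProduct_zero] at h hΦ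
  simpa [hΦ, ha] using h

lemma dotc_sum_smul_sum_smul {J Y : Type*} [Fintype J] [DecidableEq J] [DecidableEq Y]
    {Φ : J × Y → H d} (hΦ : ∀ a b, dotc d (Φ a) (Φ b) = if a = b then 1 else 0) (k l : J → ℂ)
    (y z : Y) :
    dotc d (∑ j, k j • Φ (j, y)) (∑ j, l j • Φ (j, z)) =
      if y = z then ∑ j, conj (k j) * l j else 0 := by
  simp only [dotc_eq_dotProduct] at hΦ
  simp only [dotc_eq_dotProduct, star_sum, star_smul, sum_dotProduct, dotProduct_sum,
    smul_dotProduct, dotProduct_smul, hΦ, Prod.mk.injEq]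
  split_ifs with hyz <;> simp [hyz, mul_comm]

end Orthonormal

section Attach

variable {κ : Type} {d' : κ → ℕ}

instance [∀ k, NeZero (d' k)] [∀ i, NeZero (d i)] : ∀ i, NeZero (Sum.elim d' d i)
  | .inl k => inferInstanceAs (NeZero (d' k))
  | .inr i => inferInstanceAs (NeZero (d i))

/-- The vector of the parties in `ι` obtained from a vector of all parties by fixing the
configuration `y` of the parties in `κ`. -/
def slice (y : Cfg d') : H (Sum.elim d' d) →ₗ[ℂ] H d :=
  LinearMap.funLeft ℂ ℂ fun x =>
    (Equiv.sumPiEquivProdPi fun i => Fin (Sum.elim d' d i)).symm (y, x)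

section

variable [∀ k, NeZero (d' k)] [∀ i, NeZero (d i)]

/-- The part of an error acting on the parties in `κ`. -/
def leftErr (e : Err (Sum.elim d' d)) : Err d' := fun k => e (.inl k)

/-- The part of an error acting on the parties in `ι`. -/
def rightErr (e : Err (Sum.elim d' d)) : Err d := fun i => e (.inr i)

variable [Fintype κ]

lemma slice_weyl (e : Err (Sum.elim d' d)) (Ψ : H (Sum.elim d' d)) (y : Cfg d') :
    slice y (weyl e Ψ) =
      (∏ k, (leftErr e k).2 (y k)) •
        weyl (rightErr e) (slice (y + fun k => (leftErr e k).1) Ψ) := by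
  funext x
  rw [Pi.smul_apply, smul_eq_mul, slice, LinearMap.funLeft_apply, weyl_apply, weyl_apply,
    Fintype.prod_sum_type, ← mul_assoc]
  refine congrArg₂ _ rfl (congrArg Ψ (funext fun i => ?_))
  cases i <;> rfl

lemma sum_prod_addChar_eq_zero [DecidableEq κ] {χ : ∀ k, AddChar (Fin (d' k)) ℂ} (hχ : χ ≠ 0) :
    ∑ y : Cfg d', ∏ k, χ k (y k) = 0 := by
  obtain ⟨k, hk⟩ := Function.ne_iff.1 hχ
  rw [← Fintype.prod_sum fun k y => χ k y]
  exact Finset.prod_eq_zero (Finset.mem_univ k) (AddChar.sum_eq_zero_iff_ne_zero.2 hk)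

end

variable [Fintype κ] [DecidableEq κ] [DecidableEq ι]

lemma dotc_eq_sum_slice (Ψ Θ : H (Sum.elim d' d)) :
    dotc (Sum.elim d' d) Ψ Θ = ∑ y, dotc d (slice y Ψ) (slice y Θ) := by
  simp only [dotc]
  rw [← (Equiv.sumPiEquivProdPi fun i => Fin (Sum.elim d' d i)).symm.sum_comp,
    Fintype.sum_prod_type]
  rfl

variable [∀ k, NeZero (d' k)] [∀ i, NeZero (d i)]

/-- Errors acting nontrivially on the parties in `ι` are excluded by the purity of `W`, the other
ones by the orthogonality of the slices. -/
lemma IsPure.of_slice {r : ℕ} {W : Submodule ℂ (H d)} (hW : IsPure r W)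
    {V : Submodule ℂ (H (Sum.elim d' d))} (hslice : ∀ Ψ ∈ V, ∀ y, slice y Ψ ∈ W)
    (horth : ∀ Ψ ∈ V, ∀ Θ ∈ V, ∃ c : ℂ, ∀ y z,
      dotc d (slice y Ψ) (slice z Θ) = if y = z then c else 0) :
    IsPure r V := by
  intro S hS e he heS Ψ hΨ Θ hΘ
  simp only [dotc_eq_sum_slice, slice_weyl, dotc_smul_right]
  by_cases hright : rightErr e = 0
  · obtain ⟨c, hc⟩ := horth Ψ hΨ Θ hΘ
    simp only [hright, weyl_zero, Module.End.one_apply, hc, left_eq_add]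
    by_cases hshift : (fun k => (leftErr e k).1) = 0
    · have hchar : (fun k => (leftErr e k).2) ≠ 0 := fun hchar => he <| funext fun
        | .inl k => Prod.ext (congrFun hshift k) (congrFun hchar k)
        | .inr i => congrFun hright i
      rw [if_pos hshift, ← Finset.sum_mul, sum_prod_addChar_eq_zero hchar, zero_mul]
    · simp only [if_neg hshift, mul_zero, Finset.sum_const_zero]
  · refine Finset.sum_eq_zero fun y _ => mul_eq_zero_of_right _ ?_
    exact hW (Finset.card_toRight_le.trans hS) hright
      (fun i hi => heS _ fun h => hi (Finset.mem_toRight.2 h)) _ (hslice _ hΨ _) _ (hslice _ hΘ _)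

/-- The new subspace is spanned by the vectors `∑ y, |y⟩ ⊗ Φ (j, y)` for orthonormal `Φ (j, y)` in
`W`. -/
theorem IsPure.exists_sumElim {r m : ℕ} {W : Submodule ℂ (H d)} (hW : IsPure r W)
    (hm : m * ∏ k, d' k ≤ Module.finrank ℂ W) :
    ∃ V : Submodule ℂ (H (Sum.elim d' d)), IsPure r V ∧ Module.finrank ℂ V = m := by
  obtain ⟨Φ, hΦW, hΦ⟩ := exists_orthonormal_of_card_le_finrank (α := Fin m × Cfg d')
    (by simpa using hm)
  let Ψ (j : Fin m) : H (Sum.elim d' d) := fun z =>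
    Φ (j, fun k => z (.inl k)) fun i => z (.inr i)
  have hsliceΨ (j : Fin m) (y : Cfg d') : slice y (Ψ j) = Φ (j, y) := rfl
  have hΨ : LinearIndependent ℂ Ψ := .of_comp (slice 0)
    ((linearIndependent_of_dotc_eq_ite hΦ).comp (fun j => (j, 0)) fun _ _ h => congrArg Prod.fst h)
  refine ⟨.span ℂ (Set.range Ψ), hW.of_slice ?_ ?_, by simp [finrank_span_eq_card hΨ]⟩
  · intro Θ hΘ y
    obtain ⟨k, rfl⟩ := (Submodule.mem_span_range_iff_exists_fun ℂ).1 hΘ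
    simp only [map_sum, map_smul, hsliceΨ]
    exact sum_mem fun j _ => W.smul_mem _ (hΦW _)
  · intro Θ hΘ Ξ hΞ
    obtain ⟨k, rfl⟩ := (Submodule.mem_span_range_iff_exists_fun ℂ).1 hΘ
    obtain ⟨l, rfl⟩ := (Submodule.mem_span_range_iff_exists_fun ℂ).1 hΞ
    refine ⟨∑ j, conj (k j) * l j, fun y z => ?_⟩
    simp only [map_sum, map_smul, hsliceΨ, dotc_sum_smul_sum_smul hΦ]

end Attach

section Hermitian

/-- The field with nine elements, as `𝔽₃(i)`; `star` is its nontrivial automorphism. -/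
abbrev F9 : Type := QuadraticAlgebra (ZMod 3) (-1) 0

instance : Fact (∀ r : ZMod 3, r ^ 2 ≠ -1 + 0 * r) := ⟨by decide⟩

instance : Fintype F9 := .ofEquiv _ (QuadraticAlgebra.equivProd (-1 : ZMod 3) 0).symm

namespace F9

lemma card_eq : Fintype.card F9 = 9 := by decide

lemma star_eq_pow (x : F9) : star x = x ^ 3 := by decide +revert

lemma three_nsmul (x : F9) : 3 • x = 0 := by decide +revert

lemma im_star_mul (x y : F9) : (star x * y).im = y.im * x.re - x.im * y.re := by
  simp
  ring

lemma eq_zero_of_im_eq_zero {x : F9} (h : x.im = 0)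
    (hω : (star QuadraticAlgebra.omega * x).im = 0) : x = 0 := by
  refine QuadraticAlgebra.ext ?_ h
  simpa using hω

end F9

/-- A letter `x` as an error of a three-level party, with shift `re x` and character
`t ↦ exp (2πi t im x / 3)`. -/
noncomputable def letterErr : F9 ≃+ Fin 3 × AddChar (Fin 3) ℂ :=
  .trans { QuadraticAlgebra.equivProd (-1 : ZMod 3) 0 with map_add' := fun _ _ => rfl }
    (.prodCongr (.refl (ZMod 3)) AddChar.zmodAddEquiv)

/-- A word over `F9` as an error of three-level parties. -/
noncomputable def wordErr : (ι → F9) ≃+ Err (fun _ : ι => 3) :=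
  .piCongrRight fun _ => letterErr

lemma phase_wordErr (v w : ι → F9) :
    phase (wordErr v) (wordErr w) = ZMod.stdAddChar (∑ i, (w i).im * (v i).re) :=
  (map_prod (ZMod.stdAddChar (N := 3)).toMonoidHom
    (fun i => Multiplicative.ofAdd ((w i).im * (v i).re)) Finset.univ).symm

lemma phase_wordErr_comm_iff (v w : ι → F9) :
    phase (wordErr v) (wordErr w) = phase (wordErr w) (wordErr v) ↔ (star v ⬝ᵥ w).im = 0 := by
  have him : (star v ⬝ᵥ w).im = ∑ i, (w i).im * (v i).re - ∑ i, (v i).im * (w i).re := by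
    rw [← Finset.sum_sub_distrib]
    simp only [← F9.im_star_mul]
    exact map_sum (QuadraticAlgebra.imₗ ..) _ _
  rw [phase_wordErr, phase_wordErr, ZMod.injective_stdAddChar.eq_iff, him, sub_eq_zero]

/-- Each generator `u b` contributes the two stabilizers `u b` and `i u b`; the second one turns the
vanishing of the symplectic form `im (star (u b) ⬝ᵥ w)` into that of the Hermitian form. -/
theorem exists_isPure_of_star_dotProduct_eq_zero [DecidableEq ι] {B : Type*} [Fintype B] {r : ℕ}
    {u : B → ι → F9} (hself : ∀ a b, star (u a) ⬝ᵥ u b = 0)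
    (hdual : ∀ S : Finset ι, S.card ≤ r → ∀ w : ι → F9, (∀ i ∉ S, w i = 0) →
      (∀ b, star (u b) ⬝ᵥ w = 0) → w = 0) :
    ∃ W : Submodule ℂ (H fun _ : ι => 3), IsPure r W ∧
      3 ^ Fintype.card ι ≤ 9 ^ Fintype.card B * Module.finrank ℂ W := by
  let c : Fin 2 → F9 := ![1, QuadraticAlgebra.omega]
  let s (k : B × Fin 2) : Err (fun _ : ι => 3) := wordErr (c k.2 • u k.1)
  have hs (k : B × Fin 2) : 3 • s k = 0 := by
    have hword : 3 • (c k.2 • u k.1) = 0 := funext fun i => F9.three_nsmul _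
    rw [← map_nsmul, hword, map_zero]
  have hcomm (k l : B × Fin 2) : phase (s k) (s l) = phase (s l) (s k) := by
    rw [phase_wordErr_comm_iff, star_smul, smul_dotProduct, dotProduct_smul, hself, smul_zero,
      smul_zero, QuadraticAlgebra.im_zero]
  have hdetect (S : Finset ι) (hS : S.card ≤ r) (e : Err (fun _ : ι => 3)) (he : e ≠ 0)
      (heS : ∀ i ∉ S, e i = 0) : ∃ k, phase e (s k) ≠ phase (s k) e := by
    obtain ⟨w, rfl⟩ := wordErr.surjective e
    by_contra! hw
    have hwS (i : ι) (hi : i ∉ S) : w i = 0 :=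
      letterErr.injective ((heS i hi).trans (map_zero _).symm)
    have him (b : B) (j : Fin 2) : (star (c j) * (star (u b) ⬝ᵥ w)).im = 0 := by
      have hbj := (phase_wordErr_comm_iff _ _).1 (hw (b, j)).symm
      rwa [star_smul, smul_dotProduct, smul_eq_mul] at hbj
    have hwu (b : B) : star (u b) ⬝ᵥ w = 0 :=
      F9.eq_zero_of_im_eq_zero (by simpa [c] using him b 0) (him b 1)
    exact he ((congrArg _ (hdual S hS w hwS hwu)).trans (map_zero _))
  obtain ⟨W, hW, hrank⟩ := exists_isPure_of_stabilizer (by decide) hs hcomm hdetect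
  exact ⟨W, hW, by simpa [pow_mul'] using hrank⟩

end Hermitian

section MonomialCode

lemma sum_pow_eq_zero_of_card_sub_one_dvd_imp {K : Type*} [Field K] [Fintype K] {n : ℕ}
    (hn : Fintype.card K - 1 ∣ n → n = 0) : ∑ x : K, x ^ n = 0 := by
  classical
  rcases Nat.eq_zero_or_pos n with rfl | hpos
  · simp
  · rw [Fintype.sum_eq_add_sum_subtype_ne _ 0, zero_pow hpos.ne', zero_add,
      ← unitsEquivNeZero.sum_comp fun x : { x : K // x ≠ 0 } => (x : K) ^ n]
    exact (FiniteField.sum_pow_units K n).trans (if_neg fun h => hpos.ne' (hn h))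

lemma sum_units_int_pow_of_odd {R : Type*} [Ring R] {n : ℕ} (hn : Odd n) :
    ∑ ε : ℤˣ, ((ε : ℤ) : R) ^ n = 0 := by
  simp [UnitsInt.univ, hn.neg_one_pow]

lemma eq_zero_of_sum_mul_pow_eq_zero {α R : Type*} [CommRing R] [IsDomain R] {S : Finset α}
    {f z : α → R} (hf : Set.InjOn f S) (hz : ∀ k < S.card, ∑ p ∈ S, z p * f p ^ k = 0) :
    ∀ p ∈ S, z p = 0 := by
  have hzero := Matrix.eq_zero_of_forall_pow_sum_mul_pow_eq_zero
    (f := fun j => f (S.equivFin.symm j)) (v := fun j => z (S.equivFin.symm j))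
    (hf.injective.comp S.equivFin.symm.injective) fun k => by
      rw [S.equivFin.symm.sum_comp fun p : S => z p * f p ^ (k : ℕ),
        Finset.sum_coe_sort S fun p => z p * f p ^ (k : ℕ), hz k k.2]
  exact fun p hp => by simpa using congrFun hzero (S.equivFin ⟨p, hp⟩)

/-- The label `(a, ε)` of a coordinate of the code, as the element `a + ε X` of `F9[X]`, so that
distinct labels are distinct elements of a domain even if their first entries coincide. -/
noncomputable def point (p : F9 × ℤˣ) : Polynomial F9 := .C ((p.2 : ℤ) : F9) * .X + .C p.1

lemma point_injective : Function.Injective point := by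
  intro p q h
  have h0 := congrArg (Polynomial.coeff · 0) h
  have h1 := congrArg (Polynomial.coeff · 1) h
  have hunit : Function.Injective fun ε : ℤˣ => ((ε : ℤ) : F9) := by decide
  exact Prod.ext (by simpa [point] using h0) (hunit (by simpa [point] using h1))

/-- The exponents `(s, k)` of the monomials `ε ^ s * a ^ k` that span the code. -/
def exponents : Fin 8 → ℕ × ℕ :=
  ![(0, 0), (0, 1), (0, 2), (0, 3), (0, 4), (1, 0), (1, 1), (1, 3)]

/-- The word whose letter at the label `(a, ε)` is the value of the monomial `ε ^ s * a ^ k`. -/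
def monomialWord (s k : ℕ) (p : F9 × ℤˣ) : F9 := ((p.2 : ℤ) : F9) ^ s * p.1 ^ k

/-- The listed monomials are those occurring in `(a + ε X) ^ k`, `k < 5`, in characteristic `3`. -/
lemma exists_exponents_eq : ∀ k < 5, ∀ j ≤ k, (((k.choose j : ℕ) : F9) = 0) ∨
    ∃ b, (exponents b).1 = j % 2 ∧ (exponents b).2 = k - j := by
  decide

lemma monomialWord_mod_two (s k : ℕ) : monomialWord (s % 2) k = monomialWord s k := by
  funext p
  rw [monomialWord, monomialWord, ← Int.cast_pow, ← Int.cast_pow, ← Units.val_pow_eq_pow_val,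
    ← Units.val_pow_eq_pow_val, ← Int.units_pow_eq_pow_mod_two]

lemma sum_mul_point_pow_eq_zero {S : Finset (F9 × ℤˣ)} {z : F9 × ℤˣ → F9}
    (hz : ∀ b, ∑ p ∈ S, z p * monomialWord (exponents b).1 (exponents b).2 p = 0) {k : ℕ}
    (hk : k < 5) : ∑ p ∈ S, Polynomial.C (z p) * point p ^ k = 0 := by
  have hmonomial (j : ℕ) (hj : j ≤ k) :
      (k.choose j : F9) * ∑ p ∈ S, z p * monomialWord j (k - j) p = 0 := by
    rcases exists_exponents_eq k hk j hj with hchoose | ⟨b, hs, hk⟩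
    · rw [hchoose, zero_mul]
    · rw [← monomialWord_mod_two, ← hs, ← hk, hz, mul_zero]
  calc ∑ p ∈ S, Polynomial.C (z p) * point p ^ k
      = ∑ j ∈ Finset.range (k + 1), .C ((k.choose j : F9) *
          ∑ p ∈ S, z p * monomialWord j (k - j) p) * Polynomial.X ^ j := by
        simp only [point, add_pow, monomialWord, Finset.mul_sum, map_sum, Finset.sum_mul]
        rw [Finset.sum_comm]
        refine Finset.sum_congr rfl fun j _ => Finset.sum_congr rfl fun p _ => ?_
        simp only [mul_pow, map_mul, map_pow, map_natCast]
        ring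
    _ = 0 := Finset.sum_eq_zero fun j hj => by
        rw [hmonomial j (Finset.mem_range_succ_iff.1 hj), map_zero, zero_mul]

/-- An element of `F9` of norm `ε`: rescaling the coordinates by it weights the terms of the
Hermitian form by `ε`. -/
def twist (ε : ℤˣ) : F9 := if ε = 1 then 1 else 1 + QuadraticAlgebra.omega

lemma star_twist_mul_twist (ε : ℤˣ) : star (twist ε) * twist ε = ((ε : ℤ) : F9) := by
  decide +revert

/-- The generators of a Hermitian self-orthogonal code with dual distance at least `6`. -/
def generator (b : Fin 8) (p : F9 × ℤˣ) : F9 :=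
  twist p.2 * monomialWord (exponents b).1 (exponents b).2 p

lemma star_generator_dotProduct_generator (a b : Fin 8) :
    star (generator a) ⬝ᵥ generator b = 0 := by
  have hexp : ∀ a b : Fin 8, Odd (1 + (exponents a).1 + (exponents b).1) ∨
      (8 ∣ 3 * (exponents a).2 + (exponents b).2 → 3 * (exponents a).2 + (exponents b).2 = 0) := by
    decide
  calc star (generator a) ⬝ᵥ generator b
      = ∑ x : F9, ∑ ε : ℤˣ, x ^ (3 * (exponents a).2 + (exponents b).2) *
          ((ε : ℤ) : F9) ^ (1 + (exponents a).1 + (exponents b).1) := by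
        rw [dotProduct, Fintype.sum_prod_type]
        refine Finset.sum_congr rfl fun x _ => Finset.sum_congr rfl fun ε _ => ?_
        simp only [Pi.star_apply, generator, monomialWord, star_mul', star_pow, star_intCast,
          F9.star_eq_pow x]
        linear_combination (((ε : ℤ) : F9) ^ (exponents a).1 * (x ^ 3) ^ (exponents a).2 *
          ((ε : ℤ) : F9) ^ (exponents b).1 * x ^ (exponents b).2) * star_twist_mul_twist ε
    _ = (∑ x : F9, x ^ (3 * (exponents a).2 + (exponents b).2)) *
          ∑ ε : ℤˣ, ((ε : ℤ) : F9) ^ (1 + (exponents a).1 + (exponents b).1) :=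
        (Fintype.sum_mul_sum ..).symm
    _ = 0 := by
        rcases hexp a b with h | h
        · rw [sum_units_int_pow_of_odd h, mul_zero]
        · rw [sum_pow_eq_zero_of_card_sub_one_dvd_imp (by rwa [F9.card_eq]), zero_mul]

lemma eq_zero_of_star_generator_dotProduct_eq_zero {S : Finset (F9 × ℤˣ)} (hS : S.card ≤ 5)
    {w : F9 × ℤˣ → F9} (hwS : ∀ p ∉ S, w p = 0) (hw : ∀ b, star (generator b) ⬝ᵥ w = 0) :
    w = 0 := by
  have hz (b : Fin 8) :
      ∑ p ∈ S, star (w p) * twist p.2 * monomialWord (exponents b).1 (exponents b).2 p = 0 := by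
    have hstar : star w ⬝ᵥ generator b = 0 := by rw [Matrix.star_dotProduct, hw, star_zero]
    rw [Finset.sum_subset S.subset_univ fun p _ hp => by simp [hwS p hp]]
    simpa only [mul_assoc] using! hstar
  have hzero := eq_zero_of_sum_mul_pow_eq_zero point_injective.injOn fun k hk =>
    sum_mul_point_pow_eq_zero hz (hk.trans_le hS)
  have htwist : ∀ ε, twist ε ≠ 0 := by decide
  funext p
  by_cases hp : p ∈ S
  · simpa [htwist] using hzero p hp
  · exact hwS p hp

theorem exists_isPure_five_nine_le_finrank :
    ∃ W : Submodule ℂ (H fun _ : Fin 18 => 3), IsPure 5 W ∧ 9 ≤ Module.finrank ℂ W := by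
  let e : Fin 18 ≃ F9 × ℤˣ := Fintype.equivOfCardEq (by decide)
  have hself (a b : Fin 8) : star (generator a ∘ e) ⬝ᵥ (generator b ∘ e) = 0 :=
    (comp_equiv_dotProduct_comp_equiv (star (generator a)) (generator b) e).trans
      (star_generator_dotProduct_generator a b)
  have hdual (S : Finset (Fin 18)) (hS : S.card ≤ 5) (w : Fin 18 → F9) (hwS : ∀ i ∉ S, w i = 0)
      (hw : ∀ b, star (generator b ∘ e) ⬝ᵥ w = 0) : w = 0 := by
    have hzero : w ∘ e.symm = 0 :=
      eq_zero_of_star_generator_dotProduct_eq_zero (S := S.map e.toEmbedding) (by simpa using hS)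
        (fun p hp => hwS _ (by simpa using hp))
        fun b => (dotProduct_comp_equiv_symm (star (generator b)) w e).trans (hw b)
    simpa [Function.comp_assoc] using congrArg (· ∘ e) hzero
  obtain ⟨W, hW, hrank⟩ := exists_isPure_of_star_dotProduct_eq_zero hself hdual
  rw [Fintype.card_fin, Fintype.card_fin] at hrank
  exact ⟨W, hW, by omega⟩

end MonomialCode

end RUnif

open RUnif in
/-- There exists a 9-dimensional 5-uniform subspace of `(ℂ³)^{⊗18}`
(a pure code `((18, 9, 6))₃`), a 4-dimensional 5-uniform subspace of `ℂ² ⊗ (ℂ³)^{⊗18}`,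
and a 2-dimensional 5-uniform subspace of `(ℂ²)^{⊗2} ⊗ (ℂ³)^{⊗18}`. -/
theorem statement19 :
    (∃ W : Submodule ℂ (H (fun _ : Fin 18 => 3)),
      IsUniformSubspace (fun _ : Fin 18 => 3) 5 W ∧ Module.finrank ℂ W = 9) ∧
    (∃ W : Submodule ℂ (H (Sum.elim (fun _ : Unit => 2) (fun _ : Fin 18 => 3))),
      IsUniformSubspace (Sum.elim (fun _ : Unit => 2) (fun _ : Fin 18 => 3)) 5 W ∧
      Module.finrank ℂ W = 4) ∧
    (∃ W : Submodule ℂ (H (Sum.elim (fun _ : Fin 2 => 2) (fun _ : Fin 18 => 3))),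
      IsUniformSubspace (Sum.elim (fun _ : Fin 2 => 2) (fun _ : Fin 18 => 3)) 5 W ∧
      Module.finrank ℂ W = 2) := by
  obtain ⟨W, hW, hrank⟩ := exists_isPure_five_nine_le_finrank
  obtain ⟨V, hV, hVrank⟩ := hW.exists_finrank_eq hrank
  obtain ⟨V₁, hV₁, hV₁rank⟩ := hW.exists_sumElim (m := 4) (d' := fun _ : Unit => 2)
    (by simpa using (by norm_num : 8 ≤ 9).trans hrank)
  obtain ⟨V₂, hV₂, hV₂rank⟩ := hW.exists_sumElim (m := 2) (d' := fun _ : Fin 2 => 2)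
    (by simpa using (by norm_num : 8 ≤ 9).trans hrank)
  exact ⟨⟨V, hV.isUniformSubspace, hVrank⟩, ⟨V₁, hV₁.isUniformSubspace, hV₁rank⟩,
    ⟨V₂, hV₂.isUniformSubspace, hV₂rank⟩⟩
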